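/- Let d ≥ 7, n = d(d+1)/2, and let τ be a partition of n with τ₁ ≤ n − d. Then the dimension vector v_𝛕 associated to the triple 𝛕 = (ξ_d, ξ_d, τ) is an imaginary root of the star-shaped graph Γ_𝛕, i.e. v_𝛕 lies in the Weyl group orbit of the set M of fundamental imaginary roots. -/

import Mathlib

/-!
Star-shaped graph with three legs of lengths `r 0`, `r 1`, `r 2`.
The vertex `none` is the central vertex `0`, and `some ⟨i, j⟩` is the
vertex `[i, j+1]` on the `i`-th leg.
-/

/-- Vertex set `I` of the star-shaped graph. -/
abbrev StarVertex (r : Fin 3 → ℕ) := Option ((i : Fin 3) × Fin (r i))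

/-- The entry `(e_u, e_w)` of the Cartan matrix of the star-shaped graph:
`2` on the diagonal, `-1` for adjacent vertices, `0` otherwise. -/
def cartan {r : Fin 3 → ℕ} : StarVertex r → StarVertex r → ℤ
  | none, none => 2
  | none, some p => if p.2.val = 0 then -1 else 0
  | some p, none => if p.2.val = 0 then -1 else 0
  | some p, some q =>
      if p.1 = q.1 then
        (if p.2.val = q.2.val then 2
         else if p.2.val + 1 = q.2.val ∨ q.2.val + 1 = p.2.val then -1 else 0)
      else 0

/-- The pairing `(e_u, v)` of a basis vector `e_u` with `v ∈ ℤ^I`. -/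
def pairing {r : Fin 3 → ℕ} (u : StarVertex r) (v : StarVertex r → ℤ) : ℤ :=
  ∑ w : StarVertex r, cartan u w * v w

/-- The fundamental reflection `s_u(v) = v - (v, e_u) e_u`. -/
def reflAt {r : Fin 3 → ℕ} (u : StarVertex r) (v : StarVertex r → ℤ) :
    StarVertex r → ℤ :=
  fun w => if w = u then v w - pairing u v else v w

/-- One direction of the edge relation of the star-shaped graph. -/
def legRel {r : Fin 3 → ℕ} : StarVertex r → StarVertex r → Prop
  | none, some p => p.2.val = 0
  | some p, some q => p.1 = q.1 ∧ p.2.val + 1 = q.2.val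
  | _, _ => False

/-- The star-shaped graph as a simple graph. -/
def starGraph (r : Fin 3 → ℕ) : SimpleGraph (StarVertex r) :=
  SimpleGraph.fromRel legRel

/-- `v ∈ M`: `v` is a fundamental imaginary root, i.e. `v ≠ 0`, the support of `v`
induces a connected subgraph, and `(e_u, v) ≤ 0` for every vertex `u`. -/
def IsFundImaginary {r : Fin 3 → ℕ} (v : StarVertex r → ℤ) : Prop :=
  v ≠ 0 ∧ (SimpleGraph.induce {u | v u ≠ 0} (starGraph r)).Connected ∧
    ∀ u : StarVertex r, pairing u v ≤ 0

/-- `y` lies in the Weyl-group orbit of `x` (every element of `W` is a word in the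
fundamental reflections, which are involutions). -/
def InWOrbit {r : Fin 3 → ℕ} (x y : StarVertex r → ℤ) : Prop :=
  ∃ l : List (StarVertex r), y = l.foldr reflAt x

/-- `y` lies in the orbit of `x` under the subgroup `H ≤ W` generated by the
reflections at the non-central vertices. -/
def InHOrbit {r : Fin 3 → ℕ} (x y : StarVertex r → ℤ) : Prop :=
  ∃ l : List ((i : Fin 3) × Fin (r i)), y = l.foldr (fun p => reflAt (some p)) x

/-- The coordinates of `v` read along the `i`-th leg: `coord v i 0 = v₀` is the
central coordinate, `coord v i j = v_{[i,j]}` for `1 ≤ j ≤ r i`, and `0` beyond. -/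
def coord {r : Fin 3 → ℕ} (v : StarVertex r → ℤ) (i : Fin 3) : ℕ → ℤ
  | 0 => v none
  | j + 1 => if h : j < r i then v (some ⟨i, ⟨j, h⟩⟩) else 0

/-- `δ(v) = v₀ - ∑_{i=1}^{3} (v₀ - v_{[i,1]})`. -/
def deltaInv {r : Fin 3 → ℕ} (v : StarVertex r → ℤ) : ℤ :=
  v none - ∑ i : Fin 3, (v none - coord v i 1)

/-- `v ∈ (ℕ^I)*`: the coordinates of `v` are nonnegative and non-increasing along
each leg: `v₀ ≥ v_{[i,1]} ≥ ⋯ ≥ v_{[i,r_i]} ≥ 0`. -/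
def InNStar {r : Fin 3 → ℕ} (v : StarVertex r → ℤ) : Prop :=
  ∀ (i : Fin 3) (j : ℕ), coord v i (j + 1) ≤ coord v i j

/-- The sequence `σ^i(v) = (v₀ - v_{[i,1]}, …, v_{[i,r_i-1]} - v_{[i,r_i]}, v_{[i,r_i]})`
of successive differences along the `i`-th leg (its entries are
`sigmaSeq v i 0, …, sigmaSeq v i (r i)`; it vanishes beyond). -/
def sigmaSeq {r : Fin 3 → ℕ} (v : StarVertex r → ℤ) (i : Fin 3) (j : ℕ) : ℤ :=
  coord v i j - coord v i (j + 1)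

/-- `v ∈ (ℕ^I)**`: `v ∈ (ℕ^I)*` and each `σ^i(v)` is non-increasing, i.e. `v = v_𝛍`
for a triple of partitions `𝛍`. -/
def InNStarStar {r : Fin 3 → ℕ} (v : StarVertex r → ℤ) : Prop :=
  InNStar v ∧ ∀ (i : Fin 3) (j : ℕ), sigmaSeq v i (j + 1) ≤ sigmaSeq v i j

/-- A partition of `n`: a non-increasing sequence `parts 0 ≥ parts 1 ≥ ⋯`
(`parts j` is the `(j+1)`-th part) with exactly `len` nonzero parts summing to `n`. -/
structure PartitionOf (n : ℕ) where
  parts : ℕ → ℕ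
  antitone : ∀ j : ℕ, parts (j + 1) ≤ parts j
  len : ℕ
  pos_of_lt : ∀ j < len, 0 < parts j
  zero_of_le : ∀ j : ℕ, len ≤ j → parts j = 0
  sum_parts : ∑ j ∈ Finset.range len, parts j = n

/-- The dimension vector `v_𝛍` of a triple of partitions of `n` whose parts are given
by `p 0, p 1, p 2`: coordinate `n` at the central vertex, and
`n - (μ^i_1 + ⋯ + μ^i_j)` at the vertex `[i, j]`. -/
def dimVec (r : Fin 3 → ℕ) (n : ℕ) (p : Fin 3 → ℕ → ℕ) : StarVertex r → ℤ
  | none => (n : ℤ)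
  | some q => (n : ℤ) - ∑ s ∈ Finset.range (q.2.val + 1), (p q.1 s : ℤ)

/-!
On the difference sequences `σⁱ(v)` the non-central reflections act by all permutations of each
leg, so conjugating the central reflection by them adds `δ = v₀ - ∑ᵢ σⁱ(v)_{sᵢ}` to `v₀` and to one
freely chosen entry `sᵢ` on each leg `i`. If the third position is always the same `q`, then
`c = v₀ - σ³(v)_q` is invariant, and the move at `(j, j, q)` replaces the entries `a`, `b` at `j` on
the first two legs by `c - b`, `c - a`. When these legs agree, doing this wherever `2a > c` folds
every entry `a` to `min a (c - a)`. All their entries are then at most `c / 2`, and the result is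
fundamental up to permutation as soon as `2c ≤ ∑ min a (c - a)`.

For the staircase and `c = n - τ₁ ≥ d`, the vector is already fundamental if `c ≥ 2d`, and one fold
suffices if `8 ≤ c ≤ 2d`. In the remaining case `c = d = 7` one fold leads to `v₀ = 12` and legs
`0, 1, 2, 3, 3, 2, 1`, and a second one, with `c = 5`, is needed when `τ₂ = 7`.
-/

section Reflections

variable {r : Fin 3 → ℕ}

lemma reflAt_eq_sub_single (u : StarVertex r) (v : StarVertex r → ℤ) :
    reflAt u v = v - Pi.single u (pairing u v) := by
  funext w
  by_cases h : w = u <;> simp [reflAt, h]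

lemma cartan_self (u : StarVertex r) : cartan u u = 2 := by
  cases u <;> simp [cartan]

lemma pairing_reflAt_self (u : StarVertex r) (v : StarVertex r → ℤ) :
    pairing u (reflAt u v) = -pairing u v := by
  have hsub : pairing u (reflAt u v) = pairing u v - 2 * pairing u v := by
    simp [reflAt_eq_sub_single, pairing, mul_sub, Finset.sum_sub_distrib, Pi.single_apply,
      cartan_self]
  rw [hsub]
  ring

lemma reflAt_reflAt (u : StarVertex r) (v : StarVertex r → ℤ) : reflAt u (reflAt u v) = v := by
  rw [reflAt_eq_sub_single u (reflAt u v), pairing_reflAt_self, reflAt_eq_sub_single,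
    Pi.single_neg, sub_neg_eq_add, sub_add_cancel]

lemma InWOrbit.refl (x : StarVertex r → ℤ) : InWOrbit x x := ⟨[], rfl⟩

lemma InWOrbit.trans {x y z : StarVertex r → ℤ} (hxy : InWOrbit x y) (hyz : InWOrbit y z) :
    InWOrbit x z := by
  obtain ⟨l, rfl⟩ := hxy
  obtain ⟨k, rfl⟩ := hyz
  exact ⟨k ++ l, by rw [List.foldr_append]⟩

lemma inWOrbit_reflAt (u : StarVertex r) (x : StarVertex r → ℤ) : InWOrbit (reflAt u x) x :=
  ⟨[u], by simp [reflAt_reflAt]⟩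

/-- `v` lies in the orbit `W M` of the fundamental imaginary roots. Only the imaginary roots
`w(v)` with `v ∈ M` are meant, not their negatives. -/
def IsImaginaryRoot (v : StarVertex r → ℤ) : Prop :=
  ∃ u, IsFundImaginary u ∧ InWOrbit u v

lemma IsFundImaginary.isImaginaryRoot {v : StarVertex r → ℤ} (hv : IsFundImaginary v) :
    IsImaginaryRoot v :=
  ⟨v, hv, .refl v⟩

lemma IsImaginaryRoot.of_inWOrbit {v w : StarVertex r → ℤ} (hw : IsImaginaryRoot w)
    (hwv : InWOrbit w v) : IsImaginaryRoot v :=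
  let ⟨u, hu, huw⟩ := hw
  ⟨u, hu, huw.trans hwv⟩

end Reflections

section LegDifferences

variable {r : Fin 3 → ℕ}

lemma coord_succ_coe (v : StarVertex r → ℤ) (i : Fin 3) (j : Fin (r i)) :
    coord v i (j + 1) = v (some ⟨i, j⟩) :=
  dif_pos j.isLt

lemma coord_eq_zero_of_lt (v : StarVertex r → ℤ) {i : Fin 3} {j : ℕ} (hj : r i < j) :
    coord v i j = 0 := by
  obtain ⟨m, rfl⟩ := Nat.exists_eq_succ_of_ne_zero (Nat.ne_zero_of_lt hj)
  exact dif_neg (by omega)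

lemma sigmaSeq_eq_zero_of_lt (v : StarVertex r → ℤ) {i : Fin 3} {s : ℕ} (hs : r i < s) :
    sigmaSeq v i s = 0 := by
  rw [sigmaSeq, coord_eq_zero_of_lt v hs, coord_eq_zero_of_lt v (hs.trans s.lt_succ_self), sub_zero]

lemma le_of_sigmaSeq_ne_zero {v : StarVertex r → ℤ} {i : Fin 3} {s : ℕ}
    (h : sigmaSeq v i s ≠ 0) : s ≤ r i :=
  not_lt.mp fun hs => h (sigmaSeq_eq_zero_of_lt v hs)

lemma sum_range_sigmaSeq_of_lt (v : StarVertex r → ℤ) {i : Fin 3} {m : ℕ} (hm : r i < m) :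
    ∑ s ∈ Finset.range m, sigmaSeq v i s = v none := by
  simp only [sigmaSeq, Finset.sum_range_sub', coord_eq_zero_of_lt v hm, sub_zero]
  rfl

lemma sum_range_sigmaSeq {v : StarVertex r → ℤ} {i : Fin 3} {m : ℕ}
    (hm : ∀ s ≥ m, sigmaSeq v i s = 0) : ∑ s ∈ Finset.range m, sigmaSeq v i s = v none := by
  rw [← sum_range_sigmaSeq_of_lt v (i := i) (m := m + r i + 1) (by omega)]
  exact (Finset.eventually_constant_sum hm (by omega)).symm

lemma sum_sigmaSeq_le {v : StarVertex r → ℤ} {i : Fin 3} (hv : ∀ s, 0 ≤ sigmaSeq v i s)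
    (S : Finset ℕ) : ∑ s ∈ S, sigmaSeq v i s ≤ v none := by
  obtain ⟨m, hm⟩ := S.exists_nat_subset_range
  rw [← sum_range_sigmaSeq_of_lt v (i := i) (m := max m (r i + 1)) (by omega)]
  exact Finset.sum_le_sum_of_subset_of_nonneg
    (hm.trans (Finset.range_subset_range.mpr (le_max_left _ _))) fun s _ _ => hv s

lemma sigmaSeq_add_le {v : StarVertex r → ℤ} {i : Fin 3} (hv : ∀ s, 0 ≤ sigmaSeq v i s) {s t : ℕ}
    (hst : s ≠ t) : sigmaSeq v i s + sigmaSeq v i t ≤ v none := by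
  rw [← Finset.sum_pair hst]
  exact sum_sigmaSeq_le hv {s, t}

lemma inNStar_iff {v : StarVertex r → ℤ} : InNStar v ↔ ∀ i s, 0 ≤ sigmaSeq v i s := by
  simp only [InNStar, sigmaSeq, sub_nonneg]

lemma coord_nonneg_of_inNStar {v : StarVertex r → ℤ} (hv : InNStar v) (i : Fin 3) (j : ℕ) :
    0 ≤ coord v i j := by
  rw [← coord_eq_zero_of_lt v (i := i) (j := max j (r i + 1)) (by omega)]
  exact antitone_nat_of_succ_le (hv i) (le_max_left _ _)

lemma deltaInv_eq_sub_sum_sigmaSeq (v : StarVertex r → ℤ) :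
    deltaInv v = v none - ∑ i, sigmaSeq v i 0 :=
  rfl

lemma sum_leg_ite_eq_coord (v : StarVertex r → ℤ) (i : Fin 3) (m : ℕ) :
    ∑ j : Fin (r i), (if j.val = m then v (some ⟨i, j⟩) else 0) = coord v i (m + 1) := by
  by_cases hm : m < r i
  · rw [Finset.sum_eq_single (⟨m, hm⟩ : Fin (r i)) (fun j _ hj => if_neg (hj <| Fin.ext ·))
      (by simp), if_pos rfl]
    exact (coord_succ_coe v i ⟨m, hm⟩).symm
  · rw [coord_eq_zero_of_lt v (by omega)]
    exact Finset.sum_eq_zero fun j _ => if_neg (by omega)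

lemma pairing_none (v : StarVertex r → ℤ) : pairing none v = -deltaInv v := by
  have hleg (i : Fin 3) :
      ∑ j : Fin (r i), cartan none (some ⟨i, j⟩) * v (some ⟨i, j⟩) = -coord v i 1 := by
    simp [← sum_leg_ite_eq_coord, cartan, ite_mul, ← Finset.sum_neg_distrib, apply_ite]
  rw [pairing, Fintype.sum_option, Fintype.sum_sigma, Finset.sum_congr rfl fun i _ => hleg i]
  simp only [deltaInv, cartan, Fin.sum_univ_three]
  ring

lemma pairing_some (v : StarVertex r → ℤ) (i : Fin 3) (j : Fin (r i)) :
    pairing (some ⟨i, j⟩) v = sigmaSeq v i (j + 1) - sigmaSeq v i j := by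
  have hinner : ∑ q : Fin (r i), (if q.val + 1 = j.val then v (some ⟨i, q⟩) else 0) -
      cartan (some ⟨i, j⟩) none * v none = coord v i j := by
    rcases hj : j.val with _ | m
    · simp [cartan, hj, coord]
    · simp [cartan, hj, sum_leg_ite_eq_coord]
  have hleg : ∑ p : (i : Fin 3) × Fin (r i), cartan (some ⟨i, j⟩) (some p) * v (some p) =
      2 * coord v i (j + 1) - coord v i (j + 2) -
        ∑ q : Fin (r i), (if q.val + 1 = j.val then v (some ⟨i, q⟩) else 0) := by
    rw [Fintype.sum_sigma, Finset.sum_eq_single i (fun i' _ hi => by simp [cartan, hi.symm])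
      (by simp), ← sum_leg_ite_eq_coord, ← sum_leg_ite_eq_coord, Finset.mul_sum,
      ← Finset.sum_sub_distrib, ← Finset.sum_sub_distrib]
    refine Finset.sum_congr rfl fun q _ => ?_
    simp only [cartan, if_true]
    split_ifs <;> omega
  rw [pairing, Fintype.sum_option, hleg, sigmaSeq, sigmaSeq, ← hinner]
  ring

lemma sigmaSeq_reflAt_none (v : StarVertex r → ℤ) (i : Fin 3) :
    sigmaSeq (reflAt none v) i =
      Function.update (sigmaSeq v i) 0 (sigmaSeq v i 0 + deltaInv v) := by
  funext s
  rcases s with _ | s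
  · simp only [sigmaSeq, coord, reflAt, if_true, pairing_none, sub_neg_eq_add, reduceCtorEq,
      if_false, Function.update_self]
    ring
  · simp [sigmaSeq, coord, reflAt]

lemma coord_reflAt_some (v : StarVertex r → ℤ) (i i' : Fin 3) (j : Fin (r i)) (m : ℕ) :
    coord (reflAt (some ⟨i, j⟩) v) i' m =
      coord v i' m - if i' = i ∧ m = j + 1 then pairing (some ⟨i, j⟩) v else 0 := by
  rcases m with _ | m
  · simp [coord, reflAt]
  by_cases hi : i' = i
  · subst hi
    by_cases hm : m = j
    · subst hm
      simp [coord_succ_coe, reflAt]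
    · simp [coord, reflAt, Fin.ext_iff, hm]
  · simp [coord, reflAt, hi]

lemma sigmaSeq_reflAt_some_self (v : StarVertex r → ℤ) (i : Fin 3) (j : Fin (r i)) :
    sigmaSeq (reflAt (some ⟨i, j⟩) v) i = sigmaSeq v i ∘ Equiv.swap (j : ℕ) (j + 1) := by
  funext s
  rw [Function.comp_apply, sigmaSeq, coord_reflAt_some, coord_reflAt_some, pairing_some]
  rcases eq_or_ne s j with rfl | hj
  · rw [Equiv.swap_apply_left, if_neg (by omega), if_pos ⟨rfl, rfl⟩, sigmaSeq, sigmaSeq]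
    ring
  rcases eq_or_ne s (j + 1) with rfl | hj'
  · rw [Equiv.swap_apply_right, if_pos ⟨rfl, rfl⟩, if_neg (by omega), sigmaSeq, sigmaSeq]
    ring
  · rw [Equiv.swap_apply_of_ne_of_ne hj hj', if_neg (by omega), if_neg (by omega), sub_zero,
      sub_zero, sigmaSeq]

lemma sigmaSeq_reflAt_some_of_ne (v : StarVertex r → ℤ) {i i' : Fin 3} (hi : i' ≠ i)
    (j : Fin (r i)) : sigmaSeq (reflAt (some ⟨i, j⟩) v) i' = sigmaSeq v i' := by
  funext s
  simp [sigmaSeq, coord_reflAt_some, hi]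

end LegDifferences

section LegPermutations

variable {r : Fin 3 → ℕ}

/-- The permutations of the legs' difference sequences `σ¹(v), σ²(v), σ³(v)` that are realised by
elements of the Weyl group, for every `v` at once. -/
def legPerms (r : Fin 3 → ℕ) : Submonoid (∀ i, Equiv.Perm (Fin (r i + 1))) where
  carrier := {σ | ∀ v : StarVertex r → ℤ, ∃ w, InWOrbit w v ∧ w none = v none ∧
    ∀ i (s : Fin (r i + 1)), sigmaSeq w i s = sigmaSeq v i (σ i s)}
  one_mem' v := ⟨v, .refl v, rfl, fun _ _ => rfl⟩
  mul_mem' {σ ρ} hσ hρ v := by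
    obtain ⟨w, hwv, hw₀, hw⟩ := hσ v
    obtain ⟨x, hxw, hx₀, hx⟩ := hρ w
    exact ⟨x, hxw.trans hwv, hx₀.trans hw₀, fun i s => (hx i s).trans (hw i (ρ i s))⟩

lemma mulSingle_swap_mem_legPerms (i : Fin 3) (j : Fin (r i)) :
    Pi.mulSingle i (Equiv.swap j.castSucc j.succ) ∈ legPerms r := fun v => by
  refine ⟨reflAt (some ⟨i, j⟩) v, inWOrbit_reflAt _ v, by simp [reflAt], fun i' s => ?_⟩
  by_cases hi : i' = i
  · subst hi
    rw [sigmaSeq_reflAt_some_self, Pi.mulSingle_eq_same, Function.comp_apply]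
    congr 1
    exact (Fin.val_injective.swap_apply j.castSucc j.succ s)
  · rw [sigmaSeq_reflAt_some_of_ne v hi, Pi.mulSingle_eq_of_ne hi, Equiv.Perm.one_apply]

lemma legPerms_eq_top (r : Fin 3 → ℕ) : legPerms r = ⊤ := by
  refine top_le_iff.mp fun σ _ => Submonoid.pi_mem_of_mulSingle_mem σ fun i => ?_
  have hcomap : (legPerms r).comap (MonoidHom.mulSingle _ i) = ⊤ := by
    rw [← top_le_iff, ← Equiv.Perm.mclosure_swap_castSucc_succ, Submonoid.closure_le]
    rintro _ ⟨j, rfl⟩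
    exact mulSingle_swap_mem_legPerms i j
  exact hcomap.ge (Submonoid.mem_top (σ i))

lemma exists_inWOrbit_sigmaSeq_perm (v : StarVertex r → ℤ)
    (σ : ∀ i, Equiv.Perm (Fin (r i + 1))) :
    ∃ w, InWOrbit w v ∧ w none = v none ∧
      ∀ i (s : Fin (r i + 1)), sigmaSeq w i s = sigmaSeq v i (σ i s) :=
  (legPerms_eq_top r).ge (Submonoid.mem_top σ) v

lemma exists_inWOrbit_inNStarStar {v : StarVertex r → ℤ} (hv : InNStar v) :
    ∃ w, InWOrbit w v ∧ w none = v none ∧ InNStarStar w ∧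
      ∀ i, ∃ s, sigmaSeq w i 0 = sigmaSeq v i s := by
  rw [inNStar_iff] at hv
  obtain ⟨w, hwv, hw₀, hw⟩ := exists_inWOrbit_sigmaSeq_perm v fun i =>
    Tuple.sort fun s : Fin (r i + 1) => -sigmaSeq v i s
  have hnonneg (i : Fin 3) (s : ℕ) : 0 ≤ sigmaSeq w i s := by
    rcases lt_or_ge (r i) s with hs | hs
    · exact (sigmaSeq_eq_zero_of_lt w hs).ge
    · exact (hv i _).trans_eq (hw i ⟨s, by omega⟩).symm
  refine ⟨w, hwv, hw₀, ⟨inNStar_iff.mpr hnonneg, fun i s => ?_⟩, fun i => ⟨_, hw i 0⟩⟩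
  rcases lt_or_ge s (r i) with hs | hs
  · have hsort := Tuple.monotone_sort (fun s : Fin (r i + 1) => -sigmaSeq v i s)
      (Fin.castSucc_lt_succ (i := (⟨s, hs⟩ : Fin (r i)))).le
    rw [Function.comp_apply, Function.comp_apply, ← hw, ← hw, neg_le_neg_iff] at hsort
    exact hsort
  · exact (sigmaSeq_eq_zero_of_lt w (by omega)).trans_le (hnonneg i s)

lemma exists_inWOrbit_update (v : StarVertex r → ℤ) {s : Fin 3 → ℕ} (hs : ∀ i, s i ≤ r i) {δ : ℤ}
    (hδ : δ = v none - ∑ i, sigmaSeq v i (s i)) :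
    ∃ w, InWOrbit w v ∧ w none = v none + δ ∧
      ∀ i, sigmaSeq w i = Function.update (sigmaSeq v i) (s i) (sigmaSeq v i (s i) + δ) := by
  let p (i : Fin 3) : Fin (r i + 1) := ⟨s i, Nat.lt_succ_of_le (hs i)⟩
  obtain ⟨x, hxv, hx₀, hx⟩ := exists_inWOrbit_sigmaSeq_perm v fun i => Equiv.swap 0 (p i)
  have hhead (i : Fin 3) : sigmaSeq x i 0 = sigmaSeq v i (s i) := by simpa [p] using hx i 0
  have hxδ : deltaInv x = δ := by
    simp only [hδ, deltaInv_eq_sub_sum_sigmaSeq, hx₀, hhead]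
  obtain ⟨w, hwx, hw₀, hw⟩ :=
    exists_inWOrbit_sigmaSeq_perm (reflAt none x) fun i => Equiv.swap 0 (p i)
  refine ⟨w, (hwx.trans (inWOrbit_reflAt none x)).trans hxv, ?_, fun i => funext fun t => ?_⟩
  · rw [hw₀, reflAt, if_pos rfl, pairing_none, hx₀, hxδ, sub_neg_eq_add]
  rcases lt_or_ge (r i) t with ht | ht
  · rw [Function.update_of_ne ((hs i).trans_lt ht).ne', sigmaSeq_eq_zero_of_lt w ht,
      sigmaSeq_eq_zero_of_lt v ht]
  obtain ⟨t, rfl⟩ : ∃ t' : Fin (r i + 1), (t' : ℕ) = t := ⟨⟨t, by omega⟩, rfl⟩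
  rw [hw, sigmaSeq_reflAt_none, hxδ, hhead]
  by_cases hti : t = p i
  · have hpi : (p i : ℕ) = s i := rfl
    rw [hti, Equiv.swap_apply_right, Fin.val_zero, Function.update_self, hpi, Function.update_self]
  · have hne : Equiv.swap 0 (p i) t ≠ 0 := fun h =>
      hti ((Equiv.swap_apply_eq_iff.mp h).trans (Equiv.swap_apply_left _ _))
    rw [Function.update_of_ne (Fin.val_ne_zero_iff.mpr hne), hx, Equiv.swap_apply_self,
      Function.update_of_ne fun h => hti (Fin.ext h)]

end LegPermutations

section FundamentalImaginaryRoots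

variable {r : Fin 3 → ℕ}

lemma connected_induce_support_of_inNStar {v : StarVertex r → ℤ} (hv : InNStar v)
    (hv₀ : v none ≠ 0) : (SimpleGraph.induce {u | v u ≠ 0} (starGraph r)).Connected := by
  have hleg (i : Fin 3) (m : ℕ) (hm : m < r i) (hs : v (some ⟨i, ⟨m, hm⟩⟩) ≠ 0) :
      (SimpleGraph.induce {u | v u ≠ 0} (starGraph r)).Reachable ⟨none, hv₀⟩
        ⟨some ⟨i, ⟨m, hm⟩⟩, hs⟩ := by
    induction m with
    | zero => exact SimpleGraph.Adj.reachable (by simp [starGraph, legRel])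
    | succ m ih =>
      have hpos : 0 < coord v i (m + 2) := (coord_nonneg_of_inNStar hv i _).lt_of_ne'
        (by rwa [← coord_succ_coe v i ⟨m + 1, hm⟩] at hs)
      have hs' : v (some ⟨i, ⟨m, by omega⟩⟩) ≠ 0 := by
        rw [← coord_succ_coe v i ⟨m, by omega⟩]
        exact (hpos.trans_le (hv i (m + 1))).ne'
      exact (ih (by omega) hs').trans
        (SimpleGraph.Adj.reachable (by simp [starGraph, legRel]))
  rw [SimpleGraph.connected_iff_exists_forall_reachable]
  refine ⟨⟨none, hv₀⟩, ?_⟩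
  rintro ⟨_ | ⟨i, j⟩, hu⟩
  · rfl
  · exact hleg i j j.isLt hu

lemma InNStarStar.isFundImaginary {v : StarVertex r → ℤ} (hv : InNStarStar v) (hv₀ : v none ≠ 0)
    (hδ : 0 ≤ deltaInv v) : IsFundImaginary v := by
  refine ⟨fun h => hv₀ (congrFun h none), connected_induce_support_of_inNStar hv.1 hv₀, ?_⟩
  rintro (_ | ⟨i, j⟩)
  · rw [pairing_none]
    exact neg_nonpos.mpr hδ
  · rw [pairing_some]
    exact sub_nonpos.mpr (hv.2 i j)

lemma isImaginaryRoot_of_sigmaSeq_le {v : StarVertex r → ℤ} (hv₀ : v none ≠ 0)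
    (hv : ∀ i s, 0 ≤ sigmaSeq v i s) {M : Fin 3 → ℤ} (hM : ∀ i s, sigmaSeq v i s ≤ M i)
    (hsum : ∑ i, M i ≤ v none) : IsImaginaryRoot v := by
  obtain ⟨w, hwv, hw₀, hw, hhead⟩ := exists_inWOrbit_inNStarStar (inNStar_iff.mpr hv)
  have hwM (i : Fin 3) : sigmaSeq w i 0 ≤ M i :=
    let ⟨s, hs⟩ := hhead i
    hs.trans_le (hM i s)
  refine (hw.isFundImaginary (hw₀.trans_ne hv₀) ?_).isImaginaryRoot.of_inWOrbit hwv
  rw [deltaInv_eq_sub_sum_sigmaSeq, hw₀, sub_nonneg]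
  exact (Finset.sum_le_sum fun i _ => hwM i).trans hsum

end FundamentalImaginaryRoots

section Folding

variable {r : Fin 3 → ℕ}

lemma exists_inWOrbit_piecewise (v : StarVertex r → ℤ) {J : Finset ℕ}
    (hJ : ∀ j ∈ J, j ≤ r 0 ∧ j ≤ r 1) {q : ℕ} (hq : q ≤ r 2) {c : ℤ}
    (hc : sigmaSeq v 2 q = v none - c) :
    ∃ w, InWOrbit w v ∧
      sigmaSeq w 0 = J.piecewise (fun s => c - sigmaSeq v 1 s) (sigmaSeq v 0) ∧
      sigmaSeq w 1 = J.piecewise (fun s => c - sigmaSeq v 0 s) (sigmaSeq v 1) ∧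
      sigmaSeq w 2 = Function.update (sigmaSeq v 2) q (w none - c) := by
  induction J using Finset.induction with
  | empty => exact ⟨v, .refl v, by simp, by simp, by simp [← hc]⟩
  | insert j J hj ih =>
    obtain ⟨w, hwv, hw0, hw1, hw2⟩ := ih fun j' hj' => hJ j' (Finset.mem_insert_of_mem hj')
    obtain ⟨hj0, hj1⟩ := hJ j (Finset.mem_insert_self j J)
    have hw0j : sigmaSeq w 0 j = sigmaSeq v 0 j := by rw [hw0, J.piecewise_eq_of_notMem _ _ hj]
    have hw1j : sigmaSeq w 1 j = sigmaSeq v 1 j := by rw [hw1, J.piecewise_eq_of_notMem _ _ hj]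
    have hw2q : sigmaSeq w 2 q = w none - c := by rw [hw2, Function.update_self]
    set δ := c - sigmaSeq v 0 j - sigmaSeq v 1 j with hδ
    obtain ⟨x, hxw, hx, hxσ⟩ := exists_inWOrbit_update w (s := ![j, j, q]) (δ := δ)
      (by simp [Fin.forall_fin_succ, hj0, hj1, hq]) <| by
        simp only [Fin.sum_univ_three, Matrix.cons_val, hw0j, hw1j, hw2q, hδ]
        ring
    have hx0 : sigmaSeq x 0 = Function.update (sigmaSeq w 0) j (sigmaSeq w 0 j + δ) := hxσ 0
    have hx1 : sigmaSeq x 1 = Function.update (sigmaSeq w 1) j (sigmaSeq w 1 j + δ) := hxσ 1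
    have hx2 : sigmaSeq x 2 = Function.update (sigmaSeq w 2) q (sigmaSeq w 2 q + δ) := hxσ 2
    refine ⟨x, hxw.trans hwv, ?_, ?_, ?_⟩
    · rw [hx0, Finset.piecewise_insert, ← hw0, hw0j, hδ]
      congr 1
      ring
    · rw [hx1, Finset.piecewise_insert, ← hw1, hw1j, hδ]
      congr 1
      ring
    · rw [hx2, hw2q, hx, hw2, Function.update_idem]
      congr 1
      ring

lemma exists_inWOrbit_fold {v : StarVertex r → ℤ} {a : ℕ → ℤ} (h0 : sigmaSeq v 0 = a)
    (h1 : sigmaSeq v 1 = a) {q : ℕ} (hq : q ≤ r 2) {c : ℤ} (hc : sigmaSeq v 2 q = v none - c)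
    (hc₀ : 0 ≤ c) :
    ∃ w, InWOrbit w v ∧ (sigmaSeq w 0 = fun s => min (a s) (c - a s)) ∧
      (sigmaSeq w 1 = fun s => min (a s) (c - a s)) ∧
      sigmaSeq w 2 = Function.update (sigmaSeq v 2) q (w none - c) := by
  have hle {i : Fin 3} (hi : sigmaSeq v i = a) {s : ℕ} (hs : c < 2 * a s) : s ≤ r i :=
    le_of_sigmaSeq_ne_zero (by rw [hi]; omega)
  let J : Finset ℕ := {s ∈ Finset.range (r 0 + 1) | c < 2 * a s}
  have hmem (s : ℕ) : s ∈ J ↔ c < 2 * a s := by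
    simpa [J] using fun hs => Nat.lt_succ_of_le (hle h0 hs)
  have hfold : J.piecewise (fun s => c - a s) a = fun s => min (a s) (c - a s) := by
    funext s
    simp only [Finset.piecewise, hmem]
    split_ifs <;> omega
  have hJ : ∀ j ∈ J, j ≤ r 0 ∧ j ≤ r 1 := fun j hj =>
    ⟨hle h0 ((hmem j).mp hj), hle h1 ((hmem j).mp hj)⟩
  simpa only [h0, h1, hfold] using exists_inWOrbit_piecewise v hJ hq hc

lemma isImaginaryRoot_of_two_mul_le_sum_min {v : StarVertex r → ℤ} (hv : InNStar v) {a : ℕ → ℤ}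
    (h0 : sigmaSeq v 0 = a) (h1 : sigmaSeq v 1 = a) {q : ℕ} (hq : q ≤ r 2) {c : ℤ}
    (hc : sigmaSeq v 2 q = v none - c) (hc₀ : 0 < c) (hac : ∀ s, a s ≤ c) (S : Finset ℕ)
    (hS : 2 * c ≤ ∑ s ∈ S, min (a s) (c - a s)) : IsImaginaryRoot v := by
  rw [inNStar_iff] at hv
  obtain ⟨w, hwv, hw0, hw1, hw2⟩ := exists_inWOrbit_fold h0 h1 hq hc hc₀.le
  have hfold (s : ℕ) : 0 ≤ min (a s) (c - a s) ∧ min (a s) (c - a s) ≤ c / 2 := by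
    have := hv 0 s
    rw [h0] at this
    have := hac s
    omega
  have hcw : 2 * c ≤ w none := by
    rw [← hw0] at hS
    exact hS.trans (sum_sigmaSeq_le (fun s => by simpa only [hw0] using (hfold s).1) S)
  have htail (s : ℕ) : 0 ≤ sigmaSeq w 2 s ∧ sigmaSeq w 2 s ≤ w none - 2 * (c / 2) := by
    rw [hw2]
    rcases eq_or_ne s q with rfl | hs
    · rw [Function.update_self]
      omega
    · rw [Function.update_of_ne hs]
      have := sigmaSeq_add_le (hv 2) hs
      have := hv 2 s
      omega
  have hbound : ∀ i s, 0 ≤ sigmaSeq w i s ∧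
      sigmaSeq w i s ≤ ![c / 2, c / 2, w none - 2 * (c / 2)] i := by
    intro i
    fin_cases i
    exacts [hw0 ▸ hfold, hw1 ▸ hfold, htail]
  refine (isImaginaryRoot_of_sigmaSeq_le (by omega) (fun i s => (hbound i s).1)
    (fun i s => (hbound i s).2) ?_).of_inWOrbit hwv
  simp only [Fin.sum_univ_three, Matrix.cons_val]
  omega

end Folding

section Staircase

/-- The staircase partition `ξ_d` as a sequence of integers; the truncated subtraction makes it
vanish from index `d` on. -/
def staircase (d s : ℕ) : ℤ := ((d - s : ℕ) : ℤ)

lemma sum_min_staircase (d : ℕ) (c : ℤ) :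
    ∑ s ∈ Finset.range (d + 1), min (staircase d s) (c - staircase d s) =
      ∑ x ∈ Finset.range (d + 1), min (x : ℤ) (c - x) :=
  Finset.sum_flip fun x : ℕ => min (x : ℤ) (c - x)

lemma two_mul_le_sum_min {d c : ℕ} (hd : 7 ≤ d) (hc : 8 ≤ c) (hdc : d ≤ c) (hcd : c ≤ 2 * d) :
    2 * (c : ℤ) ≤ ∑ x ∈ Finset.range (d + 1), min (x : ℤ) (c - x) := by
  have hmono {m : ℕ} (hm : m ≤ d) : ∑ x ∈ Finset.range (m + 1), min (x : ℤ) (c - x) ≤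
      ∑ x ∈ Finset.range (d + 1), min (x : ℤ) (c - x) :=
    Finset.sum_le_sum_of_subset_of_nonneg (Finset.range_subset_range.mpr (by omega))
      fun x hx _ => by have := Finset.mem_range.mp hx; omega
  have hhalf {h : ℕ} (hh : 2 * h ≤ c) :
      (∑ x ∈ Finset.range (h + 1), min (x : ℤ) (c - x)) * 2 = (h + 1) * h := by
    rw [Finset.sum_congr rfl fun x hx => min_eq_left (by have := Finset.mem_range.mp hx; omega),
      ← Nat.cast_sum]
    exact_mod_cast Finset.sum_range_id_mul_two (h + 1)
  rcases lt_or_ge c 14 with hc14 | hc14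
  · refine le_trans ?_ (hmono hd)
    interval_cases c <;> decide
  rcases Nat.even_or_odd' c with ⟨h, rfl | rfl⟩
  · have := hhalf le_rfl
    have := hmono (m := h) (by omega)
    push_cast at *
    nlinarith
  · have := hhalf (h := h) (by omega)
    have := hmono (m := h + 1) (by omega)
    rw [Finset.sum_range_succ] at this
    push_cast at *
    have : min ((h : ℤ) + 1) (2 * h + 1 - (h + 1)) = h := by omega
    nlinarith

variable {r : Fin 3 → ℕ}

lemma apply_none_of_staircase_seven_fold {v : StarVertex r → ℤ} {i : Fin 3}
    (hi : sigmaSeq v i = fun s => min (staircase 7 s) (7 - staircase 7 s)) : v none = 12 := by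
  have hzero (s : ℕ) (hs : s ≥ 7) : sigmaSeq v i s = 0 := by
    simp only [hi, staircase]
    omega
  rw [← sum_range_sigmaSeq hzero, hi]
  decide

lemma isImaginaryRoot_of_staircase_seven_fold {v : StarVertex r → ℤ} (hv : InNStar v)
    (h0 : sigmaSeq v 0 = fun s => min (staircase 7 s) (7 - staircase 7 s))
    (h1 : sigmaSeq v 1 = fun s => min (staircase 7 s) (7 - staircase 7 s))
    (h2 : ∀ s, sigmaSeq v 2 s ≤ 7) : IsImaginaryRoot v := by
  have hb (s : ℕ) : min (staircase 7 s) (7 - staircase 7 s) ≤ 3 := by omega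
  have hv₀ : v none = 12 := apply_none_of_staircase_seven_fold h0
  by_cases hq : ∃ q, sigmaSeq v 2 q = 7
  · obtain ⟨q, hq⟩ := hq
    exact isImaginaryRoot_of_two_mul_le_sum_min hv h0 h1
      (le_of_sigmaSeq_ne_zero (by rw [hq]; norm_num)) (c := 5) (by omega) (by norm_num)
      (fun s => (hb s).trans (by norm_num)) (Finset.range 7) (by decide)
  · have h2' (s : ℕ) : sigmaSeq v 2 s ≤ 6 :=
      Int.le_of_lt_add_one ((h2 s).lt_of_ne fun h => hq ⟨s, h⟩)
    refine isImaginaryRoot_of_sigmaSeq_le (M := ![3, 3, 6]) (by omega) (inNStar_iff.mp hv)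
      (fun i s => ?_) (by simp [Fin.sum_univ_three, hv₀])
    fin_cases i
    exacts [h0 ▸ hb s, h1 ▸ hb s, h2' s]

lemma isImaginaryRoot_of_staircase_seven {v : StarVertex r → ℤ} (hv : InNStar v)
    (h0 : sigmaSeq v 0 = staircase 7) (h1 : sigmaSeq v 1 = staircase 7)
    (h2 : sigmaSeq v 2 0 = v none - 7) : IsImaginaryRoot v := by
  rw [inNStar_iff] at hv
  obtain ⟨w, hwv, hw0, hw1, hw2⟩ := exists_inWOrbit_fold h0 h1 (Nat.zero_le _) h2 (by norm_num)
  have hb (s : ℕ) : 0 ≤ min (staircase 7 s) (7 - staircase 7 s) := by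
    simp only [staircase]
    omega
  have hw₀ : w none = 12 := apply_none_of_staircase_seven_fold hw0
  have htail (s : ℕ) : 0 ≤ sigmaSeq w 2 s ∧ sigmaSeq w 2 s ≤ 7 := by
    rw [hw2, hw₀]
    rcases eq_or_ne s 0 with rfl | hs
    · rw [Function.update_self]
      norm_num
    · rw [Function.update_of_ne hs]
      have := sigmaSeq_add_le (hv 2) hs
      exact ⟨hv 2 s, by omega⟩
  refine (isImaginaryRoot_of_staircase_seven_fold (inNStar_iff.mpr fun i s => ?_) hw0 hw1
    fun s => (htail s).2).of_inWOrbit hwv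
  fin_cases i
  exacts [hw0 ▸ hb s, hw1 ▸ hb s, (htail s).1]

lemma isImaginaryRoot_of_staircase_legs {d : ℕ} (hd : 7 ≤ d) {v : StarVertex r → ℤ}
    (hv : InNStarStar v) (h0 : sigmaSeq v 0 = staircase d) (h1 : sigmaSeq v 1 = staircase d)
    (hτ : sigmaSeq v 2 0 ≤ v none - d) : IsImaginaryRoot v := by
  have hv_nonneg := inNStar_iff.mp hv.1
  obtain ⟨c, hc⟩ : ∃ c : ℕ, (c : ℤ) = v none - sigmaSeq v 2 0 :=
    CanLift.prf (v none - sigmaSeq v 2 0) (by omega)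
  have h2 : sigmaSeq v 2 0 = v none - c := by omega
  rcases le_total (2 * d) c with hdc | hcd
  · refine (hv.isFundImaginary ?_ ?_).isImaginaryRoot
    · have := hv_nonneg 2 0
      omega
    · simp only [deltaInv_eq_sub_sum_sigmaSeq, Fin.sum_univ_three, h0, h1, staircase, tsub_zero]
      omega
  rcases (show 7 ≤ c by omega).eq_or_lt with rfl | hc8
  · obtain rfl : d = 7 := by omega
    exact isImaginaryRoot_of_staircase_seven hv.1 h0 h1 h2
  · refine isImaginaryRoot_of_two_mul_le_sum_min hv.1 h0 h1 (Nat.zero_le _) h2 (by omega)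
      (fun s => ?_) (Finset.range (d + 1)) ?_
    · simp only [staircase]
      omega
    · rw [sum_min_staircase]
      exact two_mul_le_sum_min hd hc8 (by omega) hcd

end Staircase

section DimensionVectors

variable {r : Fin 3 → ℕ} {n : ℕ} {p : Fin 3 → ℕ → ℕ}

lemma coord_dimVec {i : Fin 3} (hp : ∀ m, r i < m → ∑ s ∈ Finset.range m, p i s = n) (j : ℕ) :
    coord (dimVec r n p) i j = n - ∑ s ∈ Finset.range j, (p i s : ℤ) := by
  rcases j with _ | j
  · simp [coord, dimVec]
  by_cases hj : j < r i
  · simp [coord, dimVec, hj]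
  · rw [coord_eq_zero_of_lt _ (by omega), ← Nat.cast_sum, hp _ (by omega), sub_self]

lemma sigmaSeq_dimVec {i : Fin 3} (hp : ∀ m, r i < m → ∑ s ∈ Finset.range m, p i s = n) :
    sigmaSeq (dimVec r n p) i = fun s => (p i s : ℤ) := by
  funext s
  rw [sigmaSeq, coord_dimVec hp, coord_dimVec hp, Finset.sum_range_succ]
  ring

lemma inNStarStar_dimVec (hp : ∀ i m, r i < m → ∑ s ∈ Finset.range m, p i s = n)
    (hanti : ∀ i, Antitone (p i)) : InNStarStar (dimVec r n p) := by
  simp only [InNStarStar, inNStar_iff, sigmaSeq_dimVec (hp _)]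
  exact ⟨fun i s => Nat.cast_nonneg _, fun i s => Nat.cast_le.mpr (hanti i s.le_succ)⟩

lemma sum_range_staircase {d m : ℕ} (hm : d ≤ m) :
    ∑ s ∈ Finset.range m, (d - s) = d * (d + 1) / 2 := by
  rw [Finset.eventually_constant_sum (fun s hs => Nat.sub_eq_zero_of_le hs) hm,
    ← Finset.eventually_constant_sum (N := d) (fun s hs => Nat.sub_eq_zero_of_le hs) d.le_succ,
    Finset.sum_flip fun x => x, Finset.sum_range_id, Nat.add_sub_cancel, mul_comm]

lemma PartitionOf.sum_range_parts (τ : PartitionOf n) {m : ℕ} (hm : τ.len ≤ m) :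
    ∑ s ∈ Finset.range m, τ.parts s = n :=
  (Finset.eventually_constant_sum τ.zero_of_le hm).trans τ.sum_parts

end DimensionVectors

/-- If `d ≥ 7` and `τ₁ ≤ n - d` then the dimension vector of `(ξ_d, ξ_d, τ)` is an
imaginary root of `Γ_𝛕`: it lies in the Weyl-group orbit of the set `M` of
fundamental imaginary roots. -/
theorem staircase_dimVec_imaginary (d : ℕ) (hd : 7 ≤ d) (n : ℕ)
    (hn : n = d * (d + 1) / 2) (τ : PartitionOf n)
    (hτ : (τ.parts 0 : ℤ) ≤ (n : ℤ) - d) :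
    ∃ v : StarVertex ![d - 1, d - 1, τ.len - 1] → ℤ,
      IsFundImaginary v ∧
      InWOrbit v
        (dimVec ![d - 1, d - 1, τ.len - 1] n
          ![fun s => d - s, fun s => d - s, τ.parts]) := by
  set r : Fin 3 → ℕ := ![d - 1, d - 1, τ.len - 1]
  set p : Fin 3 → ℕ → ℕ := ![fun s => d - s, fun s => d - s, τ.parts]
  have hsum : ∀ i m, r i < m → ∑ s ∈ Finset.range m, p i s = n := by
    have hstair {m : ℕ} (hm : d - 1 < m) : ∑ s ∈ Finset.range m, (d - s) = n :=
      (sum_range_staircase (by omega)).trans hn.symm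
    intro i m hm
    fin_cases i
    exacts [hstair hm, hstair hm, τ.sum_range_parts (Nat.le_of_pred_lt hm)]
  have hanti (i : Fin 3) : Antitone (p i) := by
    fin_cases i
    exacts [antitone_const_tsub, antitone_const_tsub, antitone_nat_of_succ_le τ.antitone]
  exact isImaginaryRoot_of_staircase_legs hd (inNStarStar_dimVec hsum hanti)
    (sigmaSeq_dimVec (hsum 0)) (sigmaSeq_dimVec (hsum 1))
    ((congrFun (sigmaSeq_dimVec (hsum 2)) 0).trans_le hτ)
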